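/- Let G be a finite simple connected {C₃,C₄}-free graph with at least two vertices. Then (i) Lξᶜ(T(G)) ≥ 2Lξᶜ(G) + ξᶜ(L(G)) + Lξᶜ(L(G)), and (ii) Lξᶜ(T(G)) ≤ 2Lξᶜ(G) + 2M₁(G) − 4|E(G)| + ξᶜ(L(G)) + Lξᶜ(L(G)) + M₁(L(G)). -/

import Mathlib

/-!
In the total graph `T = T(G)` of a connected graph `G`, distances between two vertices of `G`, or
between two edges of `G`, agree with distances in `G`, respectively in `L(G)`: a walk in `T` can be
pushed onto either part without getting longer (`exists_walk_of_tGraph_walk_inl`,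
`exists_walk_of_tGraph_walk_inr`). A vertex and an edge of `G` are each adjacent in `T` to an element
of the other kind, so by the triangle inequality every eccentricity in `T` lies between the
corresponding eccentricity in `G` or `L(G)` and that number plus one.

Second degrees in `T` are computed exactly. The edges at distance two from a vertex `v` are the edges
avoiding `v` that have an endpoint adjacent to `v`. When `G` has no triangle and no 4-cycle, they
correspond bijectively, through their other endpoint, to the vertices at distance two from `v`, so
`d₂(v|T) = 2 d₂(v|G)`. The vertices at distance two from an edge `e` are the neighbours of
endpoints of `e` outside `e`, and triangle-freeness puts them in bijection with the edges adjacent to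
`e`, so `d₂(e|T) = d₁(e|L) + d₂(e|L)`.

The lower bound follows termwise. For the upper bound, the excess is at most
`2 Σ d₂(v|G) + Σ (d₁(e|L) + d₂(e|L))`, and in every graph `Σ (d₁ + d₂) ≤ M₁`
(`sum_deg2_add_deg1_le`). It remains to use `Σ d₁(v|G) = 2|E(G)|`.
-/

/-!
Definitions for the leap eccentric connectivity index of graph operations with
subdivided edges (Song–Tang).
-/

open SimpleGraph Finset
open scoped Classical

noncomputable section

instance edgeSetFintypeOfFintype {V : Type*} [Fintype V] (G : SimpleGraph V) :
    Fintype G.edgeSet :=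
  Set.Finite.fintype (Set.toFinite _)

/-- Eccentricity `e(v|X)` of a vertex: the maximum distance from `v` to a vertex of `X`. -/
def ecc {V : Type*} [Fintype V] (X : SimpleGraph V) (v : V) : ℕ :=
  Finset.univ.sup (fun u => X.dist v u)

/-- `d₁(v|X)`: the degree of `v`. -/
def deg1 {V : Type*} [Fintype V] (X : SimpleGraph V) (v : V) : ℕ :=
  (Finset.univ.filter (fun u => X.Adj v u)).card

/-- `d₂(v|X)`: the second degree of `v`, the number of vertices at distance exactly 2. -/
def deg2 {V : Type*} [Fintype V] (X : SimpleGraph V) (v : V) : ℕ :=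
  (Finset.univ.filter (fun u => X.dist v u = 2)).card

/-- The leap eccentric connectivity index `Lξᶜ(X) = Σ_v d₂(v|X)·e(v|X)`. -/
def leapECI {V : Type*} [Fintype V] (X : SimpleGraph V) : ℕ :=
  ∑ v, deg2 X v * ecc X v

/-- The eccentric connectivity index `ξᶜ(X) = Σ_v d₁(v|X)·e(v|X)`. -/
def eci {V : Type*} [Fintype V] (X : SimpleGraph V) : ℕ :=
  ∑ v, deg1 X v * ecc X v

/-- The first Zagreb index `M₁(X) = Σ_v d₁(v|X)²`. -/
def zagrebM1 {V : Type*} [Fintype V] (X : SimpleGraph V) : ℕ :=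
  ∑ v, (deg1 X v) ^ 2

/-- The total eccentricity `θ(X) = Σ_v e(v|X)`. -/
def totalEcc {V : Type*} [Fintype V] (X : SimpleGraph V) : ℕ :=
  ∑ v, ecc X v

/-- The number of edges `|E(X)|`. -/
def numEdges {V : Type*} (X : SimpleGraph V) : ℕ := X.edgeSet.ncard

/-- The line graph `L(G)`, with vertex set `E(G)`: two edges of `G` are adjacent in
`L(G)` iff they are distinct and share an endpoint. -/
def lineG {V : Type*} (G : SimpleGraph V) : SimpleGraph G.edgeSet :=
  SimpleGraph.fromRel (fun e f => ∃ v, v ∈ (e : Sym2 V) ∧ v ∈ (f : Sym2 V))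

/-- The subdivision graph `S(G)`, with vertex set `V(G) ⊕ E(G)`:
`v ∈ V(G)` is adjacent to `e ∈ E(G)` iff `v` is an endpoint of `e`; no other edges. -/
def subdivG {V : Type*} (G : SimpleGraph V) : SimpleGraph (V ⊕ G.edgeSet) :=
  SimpleGraph.fromRel (fun a b => match a, b with
    | Sum.inl v, Sum.inr e => v ∈ (e : Sym2 V)
    | _, _ => False)

/-- The graph `Q(G)`, with vertex set `V(G) ⊕ E(G)`: `v ∈ V(G)` is adjacent to
`e ∈ E(G)` iff `v` is an endpoint of `e`, and distinct `e, e' ∈ E(G)` are adjacent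
iff the corresponding edges share an endpoint in `G`. -/
def qGraph {V : Type*} (G : SimpleGraph V) : SimpleGraph (V ⊕ G.edgeSet) :=
  SimpleGraph.fromRel (fun a b => match a, b with
    | Sum.inl v, Sum.inr e => v ∈ (e : Sym2 V)
    | Sum.inr e, Sum.inr f => ∃ v, v ∈ (e : Sym2 V) ∧ v ∈ (f : Sym2 V)
    | _, _ => False)

/-- The graph `R(G)`, with vertex set `V(G) ⊕ E(G)`: `v, v' ∈ V(G)` are adjacent iff
they are adjacent in `G`, and `v ∈ V(G)` is adjacent to `e ∈ E(G)` iff `v` is an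
endpoint of `e`. -/
def rGraph {V : Type*} (G : SimpleGraph V) : SimpleGraph (V ⊕ G.edgeSet) :=
  SimpleGraph.fromRel (fun a b => match a, b with
    | Sum.inl v, Sum.inl w => G.Adj v w
    | Sum.inl v, Sum.inr e => v ∈ (e : Sym2 V)
    | _, _ => False)

/-- The total graph `T(G)`, with vertex set `V(G) ⊕ E(G)`: adjacency holds iff the
corresponding elements of `G` are adjacent or incident. -/
def tGraph {V : Type*} (G : SimpleGraph V) : SimpleGraph (V ⊕ G.edgeSet) :=
  SimpleGraph.fromRel (fun a b => match a, b with
    | Sum.inl v, Sum.inl w => G.Adj v w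
    | Sum.inl v, Sum.inr e => v ∈ (e : Sym2 V)
    | Sum.inr e, Sum.inr f => ∃ v, v ∈ (e : Sym2 V) ∧ v ∈ (f : Sym2 V)
    | _, _ => False)

/-- `G` is `F`-free: no induced subgraph of `G` is isomorphic to `F`. -/
def fFree {W V : Type*} (F : SimpleGraph W) (G : SimpleGraph V) : Prop :=
  ∀ s : Set V, IsEmpty (F ≃g G.induce s)

/-- The subdivision vertex join `G ∨̇ H`: the disjoint union of `S(G)` and `H`,
joining every original vertex of `G` to every vertex of `H`. -/
def svJoin {V W : Type*} (G : SimpleGraph V) (H : SimpleGraph W) :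
    SimpleGraph ((V ⊕ G.edgeSet) ⊕ W) :=
  SimpleGraph.fromRel (fun a b => match a, b with
    | Sum.inl x, Sum.inl y => (subdivG G).Adj x y
    | Sum.inl (Sum.inl _), Sum.inr _ => True
    | Sum.inr w, Sum.inr w' => H.Adj w w'
    | _, _ => False)

/-- The subdivision edge join `G ⊻ H`: the disjoint union of `S(G)` and `H`,
joining every subdivision vertex to every vertex of `H`. -/
def seJoin {V W : Type*} (G : SimpleGraph V) (H : SimpleGraph W) :
    SimpleGraph ((V ⊕ G.edgeSet) ⊕ W) :=
  SimpleGraph.fromRel (fun a b => match a, b with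
    | Sum.inl x, Sum.inl y => (subdivG G).Adj x y
    | Sum.inl (Sum.inr _), Sum.inr _ => True
    | Sum.inr w, Sum.inr w' => H.Adj w w'
    | _, _ => False)

/-- The subdivision vertex edge join `G^S △ (H₁^V ∨ H₂^S)`: the disjoint union of
`S(G)`, `H₁` and `H₂`, joining every original vertex of `G` to every vertex of `H₁`
and every subdivision vertex to every vertex of `H₂`. -/
def sveJoin {V W₁ W₂ : Type*} (G : SimpleGraph V) (H₁ : SimpleGraph W₁)
    (H₂ : SimpleGraph W₂) : SimpleGraph ((V ⊕ G.edgeSet) ⊕ (W₁ ⊕ W₂)) :=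
  SimpleGraph.fromRel (fun a b => match a, b with
    | Sum.inl x, Sum.inl y => (subdivG G).Adj x y
    | Sum.inl (Sum.inl _), Sum.inr (Sum.inl _) => True
    | Sum.inl (Sum.inr _), Sum.inr (Sum.inr _) => True
    | Sum.inr (Sum.inl w), Sum.inr (Sum.inl w') => H₁.Adj w w'
    | Sum.inr (Sum.inr w), Sum.inr (Sum.inr w') => H₂.Adj w w'
    | _, _ => False)

/-- The double corona of a base graph `B` on `A ⊕ E'` with the graphs `H₁, H₂`:
one copy of `H₁` for each `A`-vertex, joined to it, and one copy of `H₂` for each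
`E'`-vertex, joined to it. -/
def doubleCorona {A E' W₁ W₂ : Type*} (B : SimpleGraph (A ⊕ E')) (H₁ : SimpleGraph W₁)
    (H₂ : SimpleGraph W₂) : SimpleGraph ((A ⊕ E') ⊕ (A × W₁ ⊕ E' × W₂)) :=
  SimpleGraph.fromRel (fun a b => match a, b with
    | Sum.inl x, Sum.inl y => B.Adj x y
    | Sum.inl (Sum.inl v), Sum.inr (Sum.inl p) => v = p.1
    | Sum.inl (Sum.inr e), Sum.inr (Sum.inr p) => e = p.1
    | Sum.inr (Sum.inl p), Sum.inr (Sum.inl q) => p.1 = q.1 ∧ H₁.Adj p.2 q.2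
    | Sum.inr (Sum.inr p), Sum.inr (Sum.inr q) => p.1 = q.1 ∧ H₂.Adj p.2 q.2
    | _, _ => False)

/-! ### Second degrees in an arbitrary graph -/

lemma dist_eq_two_iff' {W : Type*} (X : SimpleGraph W) (u v : W) :
    X.dist u v = 2 ↔ u ≠ v ∧ ¬ X.Adj u v ∧ ∃ w, X.Adj u w ∧ X.Adj w v := by
  constructor
  · intro h
    refine ⟨?_, ?_, ?_⟩
    · rintro rfl
      simp at h
    · intro ha
      rw [← SimpleGraph.dist_eq_one_iff_adj] at ha
      omega
    · have hr : X.Reachable u v := by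
        by_contra hn
        rw [SimpleGraph.dist_eq_zero_of_not_reachable hn] at h
        omega
      obtain ⟨p, hp⟩ := hr.exists_walk_length_eq_dist
      rw [h] at hp
      match p, hp with
      | .cons h1 (.cons h2 .nil), _ => exact ⟨_, h1, h2⟩
  · rintro ⟨hne, hna, w, h1, h2⟩
    have hle := SimpleGraph.dist_le (Walk.cons h1 (Walk.cons h2 Walk.nil))
    simp only [Walk.length_cons, Walk.length_nil] at hle
    have hr : X.Reachable u v := ⟨Walk.cons h1 (Walk.cons h2 Walk.nil)⟩
    have h0 : X.dist u v ≠ 0 := fun h => hne (hr.dist_eq_zero_iff.1 h)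
    have h1 : X.dist u v ≠ 1 := fun h => hna (SimpleGraph.dist_eq_one_iff_adj.1 h)
    omega

/-- Every vertex at distance two from `v` lies in `N(a) \ {v}` for some neighbour `a` of `v`. -/
lemma deg2_add_deg1_le {W : Type*} [Fintype W] (X : SimpleGraph W) (v : W) :
    deg2 X v + deg1 X v ≤ ∑ a ∈ univ.filter (fun a => X.Adj v a), deg1 X a := by
  have h1 : deg2 X v ≤ ∑ a ∈ univ.filter (fun a => X.Adj v a),
      ((univ.filter (fun u => X.Adj a u)).erase v).card := by
    refine le_trans (Finset.card_le_card ?_) Finset.card_biUnion_le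
    intro u hu
    simp only [mem_filter, mem_univ, true_and, dist_eq_two_iff'] at hu
    obtain ⟨hne, -, w, hw1, hw2⟩ := hu
    simp only [mem_biUnion, mem_filter, mem_univ, true_and, mem_erase]
    exact ⟨w, hw1, hne.symm, hw2⟩
  have h2 : deg1 X v = ∑ a ∈ univ.filter (fun a => X.Adj v a), 1 := by
    simp [deg1]
  rw [h2]
  refine (Nat.add_le_add_right h1 _).trans ?_
  rw [← Finset.sum_add_distrib]
  refine Finset.sum_le_sum fun a ha => ?_
  rw [Finset.card_erase_add_one]
  · rfl
  · simpa using (mem_filter.1 ha).2.symm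

/-- In every graph `Σ (d₂ + d₁) ≤ M₁`: the right-hand side counts triples `(x, a, y)` with `x` and
`y` adjacent to `a`. -/
lemma sum_deg2_add_deg1_le {W : Type*} [Fintype W] (X : SimpleGraph W) :
    ∑ v, (deg2 X v + deg1 X v) ≤ zagrebM1 X := by
  refine (Finset.sum_le_sum fun v _ => deg2_add_deg1_le X v).trans (le_of_eq ?_)
  simp only [Finset.sum_filter]
  rw [Finset.sum_comm]
  refine Finset.sum_congr rfl fun a _ => ?_
  rw [← Finset.sum_filter, Finset.sum_const, smul_eq_mul, sq]
  simp only [deg1, X.adj_comm]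

lemma sum_deg1 {W : Type*} [Fintype W] (X : SimpleGraph W) :
    ∑ v, deg1 X v = 2 * numEdges X := by
  have h := X.sum_degrees_eq_twice_card_edges
  have h2 : numEdges X = X.edgeFinset.card := by
    rw [numEdges, ← SimpleGraph.coe_edgeFinset, Set.ncard_coe_finset]
  rw [h2]
  refine Eq.trans ?_ (h.trans (by congr!))
  refine Finset.sum_congr rfl fun v _ => ?_
  rw [← SimpleGraph.card_neighborFinset_eq_degree, deg1]
  congr 1
  ext u
  simp

lemma dist_le_ecc {W : Type*} [Fintype W] (X : SimpleGraph W) (v u : W) :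
    X.dist v u ≤ ecc X v :=
  Finset.le_sup (f := fun u => X.dist v u) (mem_univ u)

lemma ecc_le {W : Type*} [Fintype W] (X : SimpleGraph W) (v : W) (n : ℕ)
    (h : ∀ u, X.dist v u ≤ n) : ecc X v ≤ n :=
  Finset.sup_le fun u _ => h u

/-! ### Forbidden short cycles -/

section
variable {V : Type*} (G : SimpleGraph V)

lemma no_triangle (hC3 : fFree (SimpleGraph.cycleGraph 3) G) {a b c : V}
    (h1 : G.Adj a b) (h2 : G.Adj b c) (h3 : G.Adj c a) : False := by
  have hinj : Function.Injective ![a, b, c] := by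
    intro i j hij
    have := h1.ne; have := h2.ne; have := h3.ne
    fin_cases i <;> fin_cases j <;> simp_all
  refine (hC3 (Set.range ![a, b, c])).false ⟨Equiv.ofInjective _ hinj, ?_⟩
  intro i j
  have := h1.symm; have := h2.symm; have := h3.symm
  fin_cases i <;> fin_cases j <;> simp_all [SimpleGraph.cycleGraph_adj] <;> decide

lemma no_square (hC3 : fFree (SimpleGraph.cycleGraph 3) G)
    (hC4 : fFree (SimpleGraph.cycleGraph 4) G) {a b c d : V}
    (h1 : G.Adj a b) (h2 : G.Adj b c) (h3 : G.Adj c d) (h4 : G.Adj d a)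
    (hac : a ≠ c) (hbd : b ≠ d) : False := by
  have n1 : ¬ G.Adj a c := fun h => no_triangle G hC3 h1 h2 h.symm
  have n2 : ¬ G.Adj b d := fun h => no_triangle G hC3 h2 h3 h.symm
  have n3 : ¬ G.Adj c a := fun h => n1 h.symm
  have n4 : ¬ G.Adj d b := fun h => n2 h.symm
  have hinj : Function.Injective ![a, b, c, d] := by
    intro i j hij
    have := h1.ne; have := h2.ne; have := h3.ne; have := h4.ne
    fin_cases i <;> fin_cases j <;> simp_all
  refine (hC4 (Set.range ![a, b, c, d])).false ⟨Equiv.ofInjective _ hinj, ?_⟩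
  intro i j
  have := h1.symm; have := h2.symm; have := h3.symm; have := h4.symm
  fin_cases i <;> fin_cases j <;> simp_all [SimpleGraph.cycleGraph_adj] <;> decide

/-! ### Adjacency in the line graph and the total graph -/

lemma lineG_adj (e f : G.edgeSet) :
    (lineG G).Adj e f ↔ e ≠ f ∧ ∃ v, v ∈ (e : Sym2 V) ∧ v ∈ (f : Sym2 V) := by
  rw [lineG, SimpleGraph.fromRel_adj]
  refine and_congr_right fun _ => ⟨?_, Or.inl⟩
  rintro (h | ⟨v, h1, h2⟩)
  exacts [h, ⟨v, h2, h1⟩]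

lemma tGraph_ll (u v : V) : (tGraph G).Adj (Sum.inl u) (Sum.inl v) ↔ G.Adj u v := by
  rw [tGraph, SimpleGraph.fromRel_adj]
  constructor
  · rintro ⟨_, h | h⟩
    exacts [h, h.symm]
  · intro h
    exact ⟨fun h' => h.ne (Sum.inl.inj h'), Or.inl h⟩

lemma tGraph_lr (u : V) (e : G.edgeSet) :
    (tGraph G).Adj (Sum.inl u) (Sum.inr e) ↔ u ∈ (e : Sym2 V) := by
  rw [tGraph, SimpleGraph.fromRel_adj]
  simp

lemma tGraph_rl (u : V) (e : G.edgeSet) :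
    (tGraph G).Adj (Sum.inr e) (Sum.inl u) ↔ u ∈ (e : Sym2 V) := by
  rw [SimpleGraph.adj_comm, tGraph_lr]

lemma tGraph_rr (e f : G.edgeSet) :
    (tGraph G).Adj (Sum.inr e) (Sum.inr f) ↔ (lineG G).Adj e f := by
  rw [tGraph, lineG, SimpleGraph.fromRel_adj, SimpleGraph.fromRel_adj]
  simp

/-! ### Distances in the total graph -/

lemma exists_walk_of_mem {e : G.edgeSet} {u v : V} (hu : u ∈ (e : Sym2 V))
    (hv : v ∈ (e : Sym2 V)) : ∃ p : G.Walk u v, p.length ≤ 1 := by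
  by_cases h : u = v
  · subst h
    exact ⟨Walk.nil, by simp⟩
  · have he : (e : Sym2 V) = s(u, v) := (Sym2.mem_and_mem_iff h).1 ⟨hu, hv⟩
    have ha : G.Adj u v := by
      have := e.2
      rwa [he] at this
    exact ⟨Walk.cons ha Walk.nil, by simp⟩

lemma exists_walk_lineG {e f : G.edgeSet} {v : V} (hu : v ∈ (e : Sym2 V))
    (hv : v ∈ (f : Sym2 V)) : ∃ p : (lineG G).Walk e f, p.length ≤ 1 := by
  by_cases h : e = f
  · subst h
    exact ⟨Walk.nil, by simp⟩
  · exact ⟨Walk.cons ((lineG_adj G e f).2 ⟨h, v, hu, hv⟩) Walk.nil, by simp⟩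

/-- A walk in `T(G)` ending at a vertex `v` of `G` projects to a walk of `G`: one that starts at the
same vertex and is no longer or, when the start is an edge, one that starts at an endpoint of that
edge and is strictly shorter. -/
lemma exists_walk_of_tGraph_walk_inl {x y : V ⊕ G.edgeSet} (p : (tGraph G).Walk x y) (v : V)
    (hy : y = Sum.inl v) :
    (∀ u, x = Sum.inl u → ∃ q : G.Walk u v, q.length ≤ p.length) ∧
    (∀ e : G.edgeSet, x = Sum.inr e →
      ∃ a, a ∈ (e : Sym2 V) ∧ ∃ q : G.Walk a v, q.length + 1 ≤ p.length) := by
  induction p with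
  | nil =>
    subst hy
    refine ⟨fun u hu => ?_, fun e he => by simp at he⟩
    obtain rfl := Sum.inl.inj hu
    exact ⟨Walk.nil, by simp⟩
  | @cons x z y hxz p ih =>
    obtain ⟨ih1, ih2⟩ := ih hy
    simp only [Walk.length_cons]
    refine ⟨?_, ?_⟩
    · rintro u rfl
      rcases z with w | f
      · obtain ⟨q, hq⟩ := ih1 w rfl
        exact ⟨Walk.cons ((tGraph_ll G _ _).1 hxz) q, by simpa using hq⟩
      · obtain ⟨a, ha, q, hq⟩ := ih2 f rfl
        obtain ⟨r, hr⟩ := exists_walk_of_mem G ((tGraph_lr G _ _).1 hxz) ha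
        exact ⟨r.append q, by rw [Walk.length_append]; omega⟩
    · rintro e rfl
      rcases z with w | f
      · obtain ⟨q, hq⟩ := ih1 w rfl
        exact ⟨w, (tGraph_rl G _ _).1 hxz, q, by omega⟩
      · obtain ⟨a, ha, q, hq⟩ := ih2 f rfl
        obtain ⟨-, b, hb, hb'⟩ := (lineG_adj G _ _).1 ((tGraph_rr G _ _).1 hxz)
        obtain ⟨r, hr⟩ := exists_walk_of_mem G hb' ha
        exact ⟨b, hb, r.append q, by rw [Walk.length_append]; omega⟩

/-- A walk in `T(G)` ending at an edge `f` of `G` projects to a walk of `L(G)`: one that starts at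
the same edge and is no longer or, when the start is a vertex, one that starts at an edge through that
vertex and is strictly shorter. -/
lemma exists_walk_of_tGraph_walk_inr {x y : V ⊕ G.edgeSet} (p : (tGraph G).Walk x y)
    (f : G.edgeSet) (hy : y = Sum.inr f) :
    (∀ e, x = Sum.inr e → ∃ q : (lineG G).Walk e f, q.length ≤ p.length) ∧
    (∀ u : V, x = Sum.inl u →
      ∃ e : G.edgeSet, u ∈ (e : Sym2 V) ∧ ∃ q : (lineG G).Walk e f, q.length + 1 ≤ p.length) := by
  induction p with
  | nil =>
    subst hy
    refine ⟨fun u hu => ?_, fun e he => by simp at he⟩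
    obtain rfl := Sum.inr.inj hu
    exact ⟨Walk.nil, by simp⟩
  | @cons x z y hxz p ih =>
    obtain ⟨ih1, ih2⟩ := ih hy
    simp only [Walk.length_cons]
    refine ⟨?_, ?_⟩
    · rintro e rfl
      rcases z with w | g
      · obtain ⟨g, hg, q, hq⟩ := ih2 w rfl
        obtain ⟨r, hr⟩ := exists_walk_lineG G ((tGraph_rl G _ _).1 hxz) hg
        exact ⟨r.append q, by rw [Walk.length_append]; omega⟩
      · obtain ⟨q, hq⟩ := ih1 g rfl
        exact ⟨Walk.cons ((tGraph_rr G _ _).1 hxz) q, by simpa using hq⟩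
    · rintro u rfl
      rcases z with w | g
      · obtain ⟨g, hg, q, hq⟩ := ih2 w rfl
        have ha : G.Adj u w := (tGraph_ll G _ _).1 hxz
        obtain ⟨r, hr⟩ := exists_walk_lineG G (e := ⟨s(u, w), ha⟩) (Sym2.mem_mk_right u w) hg
        exact ⟨⟨s(u, w), ha⟩, Sym2.mem_mk_left u w, r.append q, by
          rw [Walk.length_append]; omega⟩
      · obtain ⟨q, hq⟩ := ih1 g rfl
        exact ⟨g, (tGraph_lr G _ _).1 hxz, q, by omega⟩

lemma exists_mem_edge (e : G.edgeSet) : ∃ a, a ∈ (e : Sym2 V) := by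
  obtain ⟨e, he⟩ := e
  induction e with
  | _ a b => exact ⟨a, Sym2.mem_mk_left a b⟩

lemma tGraph_connected (hconn : G.Connected) : (tGraph G).Connected := by
  let φ : G →g tGraph G := ⟨Sum.inl, fun h => (tGraph_ll G _ _).2 h⟩
  obtain ⟨v⟩ := hconn.nonempty
  have key : ∀ x, (tGraph G).Reachable x (Sum.inl v) := by
    rintro (u | e)
    · exact (hconn.preconnected u v).map φ
    · obtain ⟨a, ha⟩ := exists_mem_edge G e
      exact ((tGraph_rl G a e).2 ha).reachable.trans ((hconn.preconnected a v).map φ)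
  have : Nonempty (V ⊕ G.edgeSet) := ⟨Sum.inl v⟩
  exact ⟨fun x y => (key x).trans (key y).symm⟩

lemma tGraph_dist_inl (hconn : G.Connected) (u v : V) :
    (tGraph G).dist (Sum.inl u) (Sum.inl v) = G.dist u v := by
  let φ : G →g tGraph G := ⟨Sum.inl, fun h => (tGraph_ll G _ _).2 h⟩
  apply le_antisymm
  · obtain ⟨p, hp⟩ := hconn.exists_walk_length_eq_dist u v
    rw [← hp, ← Walk.length_map φ p]
    exact SimpleGraph.dist_le (p.map φ)
  · obtain ⟨p, hp⟩ := (tGraph_connected G hconn).exists_walk_length_eq_dist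
      (Sum.inl u) (Sum.inl v)
    obtain ⟨q, hq⟩ := (exists_walk_of_tGraph_walk_inl G p v rfl).1 u rfl
    rw [← hp]
    exact (SimpleGraph.dist_le q).trans hq

lemma tGraph_dist_inr (hconn : G.Connected) (e f : G.edgeSet) :
    (tGraph G).dist (Sum.inr e) (Sum.inr f) = (lineG G).dist e f := by
  let φ : lineG G →g tGraph G := ⟨Sum.inr, fun h => (tGraph_rr G _ _).2 h⟩
  obtain ⟨p, hp⟩ := (tGraph_connected G hconn).exists_walk_length_eq_dist
      (Sum.inr e) (Sum.inr f)
  obtain ⟨q, hq⟩ := (exists_walk_of_tGraph_walk_inr G p f rfl).1 e rfl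
  apply le_antisymm
  · obtain ⟨r, hr⟩ := (Walk.reachable q).exists_walk_length_eq_dist
    rw [← hr, ← Walk.length_map φ r]
    exact SimpleGraph.dist_le (r.map φ)
  · rw [← hp]
    exact (SimpleGraph.dist_le q).trans hq

/-! ### Vertices and edges at distance two in the total graph -/

lemma tGraph_dist_lr_eq_two (v : V) (e : G.edgeSet) :
    (tGraph G).dist (Sum.inl v) (Sum.inr e) = 2 ↔
      v ∉ (e : Sym2 V) ∧ ∃ w, w ∈ (e : Sym2 V) ∧ G.Adj v w := by
  rw [dist_eq_two_iff', tGraph_lr]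
  simp only [ne_eq, reduceCtorEq, not_false_eq_true, true_and]
  refine and_congr_right fun hv => ⟨?_, ?_⟩
  · rintro ⟨w | f, h1, h2⟩
    · exact ⟨w, (tGraph_lr G _ _).1 h2, (tGraph_ll G _ _).1 h1⟩
    · obtain ⟨-, w, hw, hw'⟩ := (lineG_adj G _ _).1 ((tGraph_rr G _ _).1 h2)
      have hvf := (tGraph_lr G _ _).1 h1
      have hne : v ≠ w := by
        rintro rfl
        exact hv hw'
      have hf : (f : Sym2 V) = s(v, w) := (Sym2.mem_and_mem_iff hne).1 ⟨hvf, hw⟩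
      have := f.2
      rw [hf] at this
      exact ⟨w, hw', this⟩
  · rintro ⟨w, hw, ha⟩
    exact ⟨Sum.inl w, (tGraph_ll G _ _).2 ha, (tGraph_lr G _ _).2 hw⟩

lemma edge_eq_of_mem (e : G.edgeSet) {w : V} (hw : w ∈ (e : Sym2 V)) :
    ∃ x, (e : Sym2 V) = s(w, x) ∧ G.Adj w x := by
  obtain ⟨x, hx⟩ := hw
  refine ⟨x, hx, ?_⟩
  have := e.2
  rwa [hx] at this

variable [Fintype V]

/-- An edge at distance two from `v` corresponds to its endpoint at distance two from `v`. -/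
lemma card_edges_dist_two (hC3 : fFree (SimpleGraph.cycleGraph 3) G)
    (hC4 : fFree (SimpleGraph.cycleGraph 4) G) (v : V) :
    (univ.filter (fun e : G.edgeSet => (tGraph G).dist (Sum.inl v) (Sum.inr e) = 2)).card
      = deg2 G v := by
  have hF : ∀ u, G.dist v u = 2 → ∃ e : G.edgeSet,
      ∃ w, (e : Sym2 V) = s(w, u) ∧ G.Adj v w ∧ G.Adj w u := by
    intro u hu
    obtain ⟨-, -, w, h1, h2⟩ := (dist_eq_two_iff' G v u).1 hu
    exact ⟨⟨s(w, u), h2⟩, w, rfl, h1, h2⟩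
  choose F hF using hF
  symm
  refine Finset.card_bij (fun u hu => F u (mem_filter.1 hu).2) ?_ ?_ ?_
  · intro u hu
    have hu := (mem_filter.1 hu).2
    obtain ⟨w, he, h1, h2⟩ := hF u hu
    obtain ⟨hne, -⟩ := (dist_eq_two_iff' G v u).1 hu
    simp only [mem_filter, mem_univ, true_and, tGraph_dist_lr_eq_two]
    rw [he]
    refine ⟨?_, w, Sym2.mem_mk_left _ _, h1⟩
    rw [Sym2.mem_iff]
    rintro (h | h)
    exacts [h1.ne h, hne h]
  · intro u hu u' hu' heq
    have hu := (mem_filter.1 hu).2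
    have hu' := (mem_filter.1 hu').2
    obtain ⟨w, he, h1, h2⟩ := hF u hu
    obtain ⟨w', he', h1', h2'⟩ := hF u' hu'
    obtain ⟨-, hna, -⟩ := (dist_eq_two_iff' G v u).1 hu
    have heq : F u hu = F u' hu' := heq
    rw [heq, he', Sym2.eq_iff] at he
    rcases he with ⟨_, h⟩ | ⟨h, _⟩
    · exact h.symm
    · exact absurd (h ▸ h1') hna
  · intro e he
    simp only [mem_filter, mem_univ, true_and, tGraph_dist_lr_eq_two] at he
    obtain ⟨hv, w, hw, ha⟩ := he
    obtain ⟨x, hx, hwx⟩ := edge_eq_of_mem G e hw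
    have hvx : v ≠ x := by
      rintro rfl
      exact hv (hx ▸ Sym2.mem_mk_right _ _)
    have hd : G.dist v x = 2 := (dist_eq_two_iff' G v x).2
      ⟨hvx, fun h => no_triangle G hC3 ha hwx h.symm, w, ha, hwx⟩
    refine ⟨x, mem_filter.2 ⟨mem_univ _, hd⟩, ?_⟩
    obtain ⟨w', he', h1', h2'⟩ := hF x hd
    apply Subtype.ext
    change ((F x hd : G.edgeSet) : Sym2 V) = e
    rw [he', hx]
    by_cases hww : w' = w
    · rw [hww]
    · exact (no_square G hC3 hC4 h1' h2' hwx.symm ha.symm hvx hww).elim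

/-- A vertex `v` at distance two from `e` corresponds to the edge joining `v` to `e`. -/
lemma card_vertices_dist_two (hC3 : fFree (SimpleGraph.cycleGraph 3) G) (e : G.edgeSet) :
    (univ.filter (fun v : V => (tGraph G).dist (Sum.inr e) (Sum.inl v) = 2)).card
      = deg1 (lineG G) e := by
  have hF : ∀ v, (tGraph G).dist (Sum.inr e) (Sum.inl v) = 2 → v ∉ (e : Sym2 V) ∧
      ∃ f : G.edgeSet, ∃ w, (f : Sym2 V) = s(w, v) ∧ w ∈ (e : Sym2 V) ∧ G.Adj w v := by
    intro v hv
    rw [SimpleGraph.dist_comm, tGraph_dist_lr_eq_two] at hv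
    obtain ⟨hv, w, hw, ha⟩ := hv
    exact ⟨hv, ⟨s(w, v), ha.symm⟩, w, rfl, hw, ha.symm⟩
  choose hn F hF using hF
  refine Finset.card_bij (fun v hv => F v (mem_filter.1 hv).2) ?_ ?_ ?_
  · intro v hv
    have hv := (mem_filter.1 hv).2
    obtain ⟨w, hf, hw, ha⟩ := hF v hv
    simp only [mem_filter, mem_univ, true_and, lineG_adj]
    refine ⟨?_, w, hw, hf ▸ Sym2.mem_mk_left _ _⟩
    intro h
    apply hn v hv
    rw [h, hf]
    exact Sym2.mem_mk_right _ _
  · intro v hv v' hv' heq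
    have hv := (mem_filter.1 hv).2
    have hv' := (mem_filter.1 hv').2
    obtain ⟨w, hf, hw, ha⟩ := hF v hv
    obtain ⟨w', hf', hw', ha'⟩ := hF v' hv'
    have heq : F v hv = F v' hv' := heq
    rw [heq, hf', Sym2.eq_iff] at hf
    rcases hf with ⟨_, h⟩ | ⟨h, _⟩
    · exact h.symm
    · exact absurd (h ▸ hw') (hn v hv)
  · intro f hf
    simp only [mem_filter, mem_univ, true_and, lineG_adj] at hf
    obtain ⟨hne, w, hwe, hwf⟩ := hf
    obtain ⟨v, hv, hwv⟩ := edge_eq_of_mem G f hwf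
    have hve : v ∉ (e : Sym2 V) := by
      intro h
      apply hne
      apply Subtype.ext
      rw [hv]
      exact (Sym2.mem_and_mem_iff hwv.ne).1 ⟨hwe, h⟩
    have hd : (tGraph G).dist (Sum.inr e) (Sum.inl v) = 2 := by
      rw [SimpleGraph.dist_comm, tGraph_dist_lr_eq_two]
      exact ⟨hve, w, hwe, hwv.symm⟩
    refine ⟨v, mem_filter.2 ⟨mem_univ _, hd⟩, ?_⟩
    obtain ⟨w', hf', hw', ha'⟩ := hF v hd
    apply Subtype.ext
    change ((F v hd : G.edgeSet) : Sym2 V) = f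
    rw [hf', hv]
    by_cases hww : w' = w
    · rw [hww]
    · have he : (e : Sym2 V) = s(w', w) := (Sym2.mem_and_mem_iff hww).1 ⟨hw', hwe⟩
      have hadj := e.2
      rw [he] at hadj
      exact (no_triangle G hC3 hadj hwv ha'.symm).elim

/-! ### Second degrees and eccentricities in the total graph -/

lemma deg2_sum_split {A B : Type*} [Fintype A] [Fintype B] (X : SimpleGraph (A ⊕ B))
    (x : A ⊕ B) :
    deg2 X x = (univ.filter (fun a : A => X.dist x (Sum.inl a) = 2)).card +
      (univ.filter (fun b : B => X.dist x (Sum.inr b) = 2)).card := by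
  simp only [deg2, Finset.card_filter, Fintype.sum_sum_type]

lemma deg2_tGraph_inl (hconn : G.Connected) (hC3 : fFree (SimpleGraph.cycleGraph 3) G)
    (hC4 : fFree (SimpleGraph.cycleGraph 4) G) (v : V) :
    deg2 (tGraph G) (Sum.inl v) = 2 * deg2 G v := by
  rw [deg2_sum_split, card_edges_dist_two G hC3 hC4]
  simp only [tGraph_dist_inl G hconn]
  rw [two_mul]
  rfl

lemma deg2_tGraph_inr (hconn : G.Connected) (hC3 : fFree (SimpleGraph.cycleGraph 3) G)
    (e : G.edgeSet) :
    deg2 (tGraph G) (Sum.inr e) = deg1 (lineG G) e + deg2 (lineG G) e := by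
  rw [deg2_sum_split, card_vertices_dist_two G hC3]
  simp only [tGraph_dist_inr G hconn]
  rfl

lemma ecc_tGraph_inl (hconn : G.Connected) (v : V) :
    ecc G v ≤ ecc (tGraph G) (Sum.inl v) ∧ ecc (tGraph G) (Sum.inl v) ≤ ecc G v + 1 := by
  constructor
  · refine ecc_le _ _ _ fun u => ?_
    rw [← tGraph_dist_inl G hconn]
    exact dist_le_ecc _ _ _
  · refine ecc_le _ _ _ ?_
    rintro (u | e)
    · rw [tGraph_dist_inl G hconn]
      exact (dist_le_ecc _ _ _).trans (Nat.le_succ _)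
    · obtain ⟨a, ha⟩ := exists_mem_edge G e
      have h1 := (tGraph_connected G hconn).dist_triangle
        (u := Sum.inl v) (v := Sum.inl a) (w := Sum.inr e)
      rw [tGraph_dist_inl G hconn,
        SimpleGraph.dist_eq_one_iff_adj.2 ((tGraph_lr G a e).2 ha)] at h1
      have := dist_le_ecc G v a
      omega

lemma ecc_tGraph_inr (hconn : G.Connected) (hcard : 2 ≤ Fintype.card V) (e : G.edgeSet) :
    ecc (lineG G) e ≤ ecc (tGraph G) (Sum.inr e) ∧
      ecc (tGraph G) (Sum.inr e) ≤ ecc (lineG G) e + 1 := by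
  constructor
  · refine ecc_le _ _ _ fun u => ?_
    rw [← tGraph_dist_inr G hconn]
    exact dist_le_ecc _ _ _
  · refine ecc_le _ _ _ ?_
    rintro (u | f)
    · have : Nontrivial V := Fintype.one_lt_card_iff_nontrivial.1 hcard
      obtain ⟨w, hw⟩ := hconn.preconnected.exists_adj_of_nontrivial u
      have h1 := (tGraph_connected G hconn).dist_triangle
        (u := Sum.inr e) (v := Sum.inr ⟨s(u, w), hw⟩) (w := Sum.inl u)
      rw [tGraph_dist_inr G hconn, SimpleGraph.dist_eq_one_iff_adj.2
        ((tGraph_rl G u ⟨s(u, w), hw⟩).2 (Sym2.mem_mk_left u w))] at h1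
      have := dist_le_ecc (lineG G) e ⟨s(u, w), hw⟩
      omega
    · rw [tGraph_dist_inr G hconn]
      exact (dist_le_ecc _ _ _).trans (Nat.le_succ _)

end

/-! ### The bounds -/

theorem tGraph_leapECI_bounds {V : Type*} [Fintype V] (G : SimpleGraph V)
    (hconn : G.Connected) (hcard : 2 ≤ Fintype.card V)
    (hC3 : fFree (SimpleGraph.cycleGraph 3) G)
    (hC4 : fFree (SimpleGraph.cycleGraph 4) G) :
    2 * leapECI G + eci (lineG G) + leapECI (lineG G) ≤ leapECI (tGraph G) ∧
    (leapECI (tGraph G) : ℤ) ≤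
      2 * (leapECI G : ℤ) + 2 * (zagrebM1 G : ℤ) - 4 * (numEdges G : ℤ) +
        (eci (lineG G) : ℤ) + (leapECI (lineG G) : ℤ) + (zagrebM1 (lineG G) : ℤ) := by
  have hT : leapECI (tGraph G) =
      ∑ v, 2 * deg2 G v * ecc (tGraph G) (Sum.inl v) +
      ∑ e, (deg1 (lineG G) e + deg2 (lineG G) e) * ecc (tGraph G) (Sum.inr e) := by
    simp only [leapECI, Fintype.sum_sum_type, deg2_tGraph_inl G hconn hC3 hC4,
      deg2_tGraph_inr G hconn hC3]
  have hG : 2 * leapECI G = ∑ v, 2 * deg2 G v * ecc G v := by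
    simp only [leapECI, Finset.mul_sum, mul_assoc]
  have hL : eci (lineG G) + leapECI (lineG G) =
      ∑ e, (deg1 (lineG G) e + deg2 (lineG G) e) * ecc (lineG G) e := by
    simp only [eci, leapECI, add_mul, Finset.sum_add_distrib]
  constructor
  · rw [hT, add_assoc, hG, hL]
    exact Nat.add_le_add
      (Finset.sum_le_sum fun v _ => Nat.mul_le_mul_left _ (ecc_tGraph_inl G hconn v).1)
      (Finset.sum_le_sum fun e _ => Nat.mul_le_mul_left _ (ecc_tGraph_inr G hconn hcard e).1)
  · have h1 : ∑ v, 2 * deg2 G v * ecc (tGraph G) (Sum.inl v) ≤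
        2 * leapECI G + 2 * ∑ v, deg2 G v := by
      rw [hG, Finset.mul_sum, ← Finset.sum_add_distrib]
      refine Finset.sum_le_sum fun v _ => ?_
      exact (Nat.mul_le_mul_left _ (ecc_tGraph_inl G hconn v).2).trans (le_of_eq (by ring))
    have h2 : ∑ e, (deg1 (lineG G) e + deg2 (lineG G) e) * ecc (tGraph G) (Sum.inr e) ≤
        eci (lineG G) + leapECI (lineG G) +
          ∑ e, (deg2 (lineG G) e + deg1 (lineG G) e) := by
      rw [hL, ← Finset.sum_add_distrib]
      refine Finset.sum_le_sum fun e _ => ?_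
      exact (Nat.mul_le_mul_left _ (ecc_tGraph_inr G hconn hcard e).2).trans (le_of_eq (by ring))
    have h3 := sum_deg2_add_deg1_le G
    rw [Finset.sum_add_distrib, sum_deg1] at h3
    have h4 := sum_deg2_add_deg1_le (lineG G)
    omega
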